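/- Programs are finite binary words; $|p|$ is the length of $p\in\{0,1\}^*$. For a partial recursive $V:\{0,1\}^*\rightharpoonup\mathbb N$ put $K_V(n)=\min\{|p| : V(p)=n\}$, with $\min\emptyset=\infty$. Call $V$ optimal if for every partial recursive $W:\{0,1\}^*\rightharpoonup\mathbb N$ there is a constant $c$ with $K_V(n)\le K_W(n)+c$ for all $n$. Let $K=K_{U_0}$ for an optimal $U_0$ (plain Kolmogorov complexity). Let $\varphi_e$ be the partial recursive function $\mathbb N\rightharpoonup\mathbb N$ with Gödel number $e$, and let $PR$ be the set of all these functions. An effective operation is a map $F:PR\to PR$ for which there is a total recursive $f:\mathbb N\to\mathbb N$ with $F(\varphi_e)=\varphi_{f(e)}$ for all $e$; $\mathrm{Eff}$ is the set of effective operations. A map $G:\{0,1\}^*\to\mathrm{Eff}$ is effectively given if there is a total recursive $h$ with $G(p)(\varphi_e)=\varphi_{h(p,e)}$ for all $p,e$. A strongly universal enumeration of $\mathrm{Eff}$ is an effectively given $U:\{0,1\}^*\to\mathrm{Eff}$ for which there is a total recursive $\mathrm{comp}:\{0,1\}^*\times\{0,1\}^*\to\{0,1\}^*$ such that the maps $p\mapsto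 U(\mathrm{comp}(e,p))$, $e\in\{0,1\}^*$, are exactly the effectively given maps $\{0,1\}^*\to\mathrm{Eff}$, and for each $e$ there is a constant $c(e)$ with $|\mathrm{comp}(e,p)|\le|p|+c(e)$ for all $p$. For $n\in\mathbb N$ the iterator $It_n:PR\to PR$ is given by $It_0(f)=f$ and $It_{n+1}(f)=It_n(f)\circ f$. For $n\ge 1$ the negative iterator $It_{-n}$ acts on programs: for a program of $f$, $It_{-n}(f)$ has domain $\mathrm{Range}(It_n(f))$, and $It_{-n}(f)(x)$ is the $y$ such that $It_n(f)(y)$ is the first computation found to halt with value $x$ when the computations $It_n(f)(0),It_n(f)(1),\dots$ are dovetailed; an effective operation equals $It_{-n}$ if it agrees with this on every program of every $f\in PR$. For a strongly universal enumeration $U$ and $m\in\mathbb Z$ put $K^{\mathbb Z}_{Church}(m)=\min\{|p| : U(p)=It_m\}$, again with $\min\emptyset=\infty$. Then for every strongly universal enumeration $U$ of $\mathrm{Eff}$ and every optimal $U_0$, the values $K^{\mathbb Z}_{Church}(n)$ and $K(n)$ are finite for all $n\in\mathbb N$, and $K^{\mathbb Z}_{Church}\!\upharpoonright\!\mathbb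 N=_{\rm ct}K$: there is a constant $c$ with $$|K^{\mathbb Z}_{Church}(n)-K(n)|\le c\quad\text{for all } n\in\mathbb N.$$ -/

import Mathlib

open Nat.Partrec (Code)

/-- Programs: finite binary words. -/
abbrev Word : Type := List Bool

/-- `f ≤ct g`: there is a constant `c` with `f(n) ≤ g(n) + c` for all `n`
(values in `ℕ ∪ {∞}`, since `K_W(n) = ∞` when `n` is not in the range of `W`). -/
def LeCt (f g : ℕ → ℕ∞) : Prop := ∃ c : ℕ, ∀ n : ℕ, f n ≤ g n + c

/-- `f =ct g`: both `f` and `g` take only finite values, and there is a constant `c` with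
`|f(n) − g(n)| ≤ c` for all `n`. -/
def EqCt (f g : ℕ → ℕ∞) : Prop :=
  ∃ c : ℕ, ∀ n : ℕ, ∃ a b : ℕ, f n = a ∧ g n = b ∧ |(a : ℤ) - (b : ℤ)| ≤ c

/-- `K_V(n) = min{|p| : V(p) = n}`, with `min ∅ = ∞`. -/
noncomputable def KOf (V : Word →. ℕ) (n : ℕ) : ℕ∞ :=
  ⨅ (p : Word) (_ : n ∈ V p), (p.length : ℕ∞)

/-- `V` is an optimal partial recursive function `{0,1}* ⇀ ℕ`. -/
def OptimalPlain (V : Word →. ℕ) : Prop :=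
  Partrec V ∧ ∀ W : Word →. ℕ, Partrec W → LeCt (KOf V) (KOf W)

/-- The set `PR(ℕ→ℕ)` of partial recursive functions `ℕ ⇀ ℕ`. -/
def PRFun : Type := {f : ℕ →. ℕ // Nat.Partrec f}

/-- `φ_e`, the partial recursive function `ℕ ⇀ ℕ` with Gödel number `e`. -/
def phi (e : ℕ) : PRFun :=
  ⟨(Denumerable.ofNat Code e).eval, Nat.Partrec.Code.exists_code.mpr ⟨_, rfl⟩⟩

/-- `F : PR(ℕ→ℕ) → PR(ℕ→ℕ)` is an effective operation: it is induced by a total recursive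
function on Gödel numbers (which is then automatically extensional). -/
def IsEffOp (F : PRFun → PRFun) : Prop :=
  ∃ f : ℕ → ℕ, Computable f ∧ ∀ e : ℕ, F (phi e) = phi (f e)

/-- `Eff`: the set of all effective operations `PR(ℕ→ℕ) → PR(ℕ→ℕ)`. -/
def Eff : Type := {F : PRFun → PRFun // IsEffOp F}

/-- Effectively given maps `G : {0,1}* → Eff`: the effective operation `G(p)` is induced by a
total recursive function on Gödel numbers, uniformly in `p`. -/
def EffGiven (G : Word → Eff) : Prop :=
  ∃ h : Word → ℕ → ℕ, Computable₂ h ∧ ∀ (p : Word) (e : ℕ), (G p).val (phi e) = phi (h p e)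

/-- `U : {0,1}* → Eff` is a strongly universal enumeration of the effective operations:
`U` is effectively given, and there is a total recursive `comp` such that the maps
`U_e : p ↦ U(comp(e,p))` enumerate exactly the effectively given maps `{0,1}* → Eff`, and
`|comp(e,p)| ≤ |p| + c(e)`. -/
def StronglyUniversalEff (U : Word → Eff) : Prop :=
  EffGiven U ∧
  ∃ comp : Word → Word → Word, Computable₂ comp ∧
    Set.range (fun (e : Word) (p : Word) => U (comp e p)) = {G : Word → Eff | EffGiven G} ∧
    ∀ e : Word, ∃ c : ℕ, ∀ p : Word, (comp e p).length ≤ p.length + c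

/-- Composition `g ∘ f` in `PR(ℕ→ℕ)`. -/
def compPR (g f : PRFun) : PRFun :=
  ⟨fun x => (f.val x).bind g.val, by
    exact Partrec.nat_iff.1
      ((Partrec.nat_iff.2 f.2).bind ((Partrec.nat_iff.2 g.2).comp Computable.snd))⟩

/-- The iterators `It_n`: `It_0(f) = f` and `It_{n+1}(f) = It_n(f) ∘ f`. -/
def It : ℕ → PRFun → PRFun
  | 0 => fun f => f
  | n + 1 => fun f => compPR (It n f) f

/-- The program computing `It_n(f)` obtained from a program `c` for `f`. -/
def itCode : ℕ → Code → Code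
  | 0, c => c
  | n + 1, c => Code.comp (itCode n c) c

/-- The negative iterator `It_{-n}` applied to a function given by a program `c`: on input `x`,
dovetail the computations of `It_n(f)` on `0, 1, 2, …` (at step `t = ⟨s, y⟩` run `It_n(f)(y)`
for `s` steps) and return the `y` of the first computation found to halt with value `x`. Which
computation halts first depends on the program `c` and not only on the function `f`, so this is
an operation on programs. -/
def negItCode (n : ℕ) (c : Code) : ℕ →. ℕ := fun x =>
  Nat.rfindOpt fun t =>
    if x ∈ Nat.Partrec.Code.evaln t.unpair.1 (itCode n c) t.unpair.2
    then some t.unpair.2 else none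

/-- `F = It_m`, for `m ∈ ℤ`. For `m < 0` this says that `F` is the operation induced by the
negative iterator on Gödel numbers. -/
def IsIt : ℤ → (PRFun → PRFun) → Prop
  | Int.ofNat n, F => F = It n
  | Int.negSucc n, F =>
      ∀ e : ℕ, (F (phi e)).val = negItCode (n + 1) (Denumerable.ofNat Code e)

/-- The ℤ-Church Kolmogorov complexity `K^ℤ_Church(m) = min{|p| : U(p) = It_m}`, with
`min ∅ = ∞`. -/
noncomputable def KChurchZ (U : Word → Eff) (m : ℤ) : ℕ∞ :=
  ⨅ (p : Word) (_ : IsIt m (U p).val), (p.length : ℕ∞)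

theorem phi_surjective (f : PRFun) : ∃ e : ℕ, phi e = f := by
  obtain ⟨c, hc⟩ := Code.exists_code.1 f.2
  refine ⟨Encodable.encode c, Subtype.ext ?_⟩
  simp [phi, hc]

theorem KOf_le {V : Word →. ℕ} {n : ℕ} {p : Word} (h : n ∈ V p) :
    KOf V n ≤ p.length :=
  iInf₂_le p h

theorem KChurchZ_le {U : Word → Eff} {n : ℕ} {p : Word} (h : (U p).val = It n) :
    KChurchZ U (n : ℤ) ≤ p.length :=
  iInf₂_le p h

/-- The program `itCode n c` computes the `n`-th iterator of the function of `c`. -/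
theorem eval_itCode (n : ℕ) (e : ℕ) :
    (itCode n (Denumerable.ofNat Code e)).eval = (It n (phi e)).val := by
  induction n with
  | zero => rfl
  | succ n ih =>
    funext x
    change ((Denumerable.ofNat Code e).eval x).bind
        (itCode n (Denumerable.ofNat Code e)).eval = _
    rw [ih]
    rfl

theorem computable₂_itCode : Computable₂ itCode := by
  have h : Computable fun q : ℕ × Code =>
      (Nat.rec q.2 (fun _ d => Code.comp d q.2) q.1 : Code) :=
    Computable.nat_rec Computable.fst Computable.snd
      (Code.primrec₂_comp.to_comp.comp (Computable.snd.comp Computable.snd)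
        (Computable.snd.comp Computable.fst)).to₂
  refine h.of_eq fun q => ?_
  obtain ⟨n, c⟩ := q
  induction n with
  | zero => rfl
  | succ n ih => exact congrArg (fun d => Code.comp d c) ih

/-- The parameter theorem for partial recursive functions of a computable parameter. -/
theorem exists_computable_phi_eq {α : Type*} [Primcodable α] (g : α → ℕ →. ℕ)
    (hg : Partrec₂ g) :
    ∃ h : α → ℕ, Computable h ∧ ∀ a, (phi (h a)).val = g a := by
  obtain ⟨c, hc⟩ := Code.exists_code.1 hg
  refine ⟨fun a => Encodable.encode (Code.curry c (Encodable.encode a)),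
    Computable.encode.comp
      (Code.primrec₂_curry.to_comp.comp (Computable.const c) Computable.encode), fun a => ?_⟩
  funext x
  have hx : Nat.pair (Encodable.encode a) x = Encodable.encode (a, x) := rfl
  simp only [phi, Denumerable.ofNat_encode, Code.eval_curry, hc, hx, Encodable.encodek,
    Part.coe_some, Part.bind_some]
  exact Part.map_id' (fun _ => rfl) _

/-- Every partial recursive `V` gives an effectively given map sending `p` to `It_{V(p)}`. -/
theorem exists_effGiven_iterator (V : Word →. ℕ) (hV : Partrec V) :
    ∃ G : Word → Eff, EffGiven G ∧ ∀ p n, n ∈ V p → (G p).val = It n := by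
  let g : Word × ℕ → ℕ →. ℕ := fun a x =>
    (V a.1).bind fun n => (itCode n (Denumerable.ofNat Code a.2)).eval x
  have hg : Partrec₂ g :=
    (hV.comp (Computable.fst.comp Computable.fst)).bind
      (Code.eval_part.comp
        (computable₂_itCode.comp Computable.snd
          ((Computable.ofNat Code).comp
            (Computable.snd.comp (Computable.fst.comp Computable.fst))))
        (Computable.snd.comp Computable.fst)).to₂
  obtain ⟨h, hh, hphi⟩ := exists_computable_phi_eq g hg
  have ext (p : Word) (e e' : ℕ) (hee : phi e = phi e') : phi (h (p, e)) = phi (h (p, e')) := by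
    apply Subtype.ext
    rw [hphi, hphi]
    funext x
    simp only [g, eval_itCode, hee]
  choose index index_spec using phi_surjective
  have F_phi (p : Word) (e : ℕ) : phi (h (p, index (phi e))) = phi (h (p, e)) :=
    ext p _ _ (index_spec _)
  refine ⟨fun p => ⟨fun f => phi (h (p, index f)), fun e => h (p, e),
    hh.comp (Computable.pair (Computable.const p) Computable.id), F_phi p⟩,
    ⟨fun p e => h (p, e), hh, F_phi⟩, fun p n hn => ?_⟩
  funext f
  apply Subtype.ext
  change (phi (h (p, index f))).val = _
  rw [hphi]
  funext x
  simp only [g, Part.eq_some_iff.2 hn, Part.bind_some, eval_itCode, index_spec]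

theorem KChurchZ_leCt_KOf {U : Word → Eff} (hU : StronglyUniversalEff U)
    {V : Word →. ℕ} (hV : Partrec V) :
    LeCt (fun n => KChurchZ U (n : ℤ)) (KOf V) := by
  obtain ⟨-, comp, -, hrange, hlen⟩ := hU
  obtain ⟨G, hG, hGit⟩ := exists_effGiven_iterator V hV
  obtain ⟨e, he⟩ : G ∈ Set.range fun (e p : Word) => U (comp e p) := hrange ▸ hG
  obtain ⟨c, hc⟩ := hlen e
  refine ⟨c, fun n => ?_⟩
  simp only [KOf, ENat.iInf_add]
  refine le_iInf₂ fun p hp => ?_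
  have hUp : (U (comp e p)).val = It n := by
    rw [← hGit p n hp, ← he]
  exact (KChurchZ_le hUp).trans (mod_cast hc p)

theorem It_succ_apply (f : PRFun) (hf : ∀ x, f.val x = Part.some (x + 1)) (n x : ℕ) :
    (It n f).val x = Part.some (x + n + 1) := by
  induction n generalizing x with
  | zero => exact hf x
  | succ n ih =>
    change (f.val x).bind (It n f).val = _
    rw [hf]
    refine (Part.bind_some _ _).trans ((ih (x + 1)).trans (congrArg Part.some ?_))
    omega

/-- Applying `U(p)` to the successor function at `0` decodes the index of an iterator. -/
theorem exists_partrec_KOf_le_KChurchZ {U : Word → Eff} (hU : EffGiven U) :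
    ∃ W : Word →. ℕ, Partrec W ∧ ∀ n : ℕ, KOf W n ≤ KChurchZ U (n : ℤ) := by
  obtain ⟨h, hh, hphi⟩ := hU
  let e : ℕ := Encodable.encode Code.succ
  have he (x : ℕ) : (phi e).val x = Part.some (x + 1) := by
    simp [phi, e, Code.eval]
  refine ⟨fun p => ((Denumerable.ofNat Code (h p e)).eval 0).map Nat.pred, ?_, fun n => ?_⟩
  · exact (Code.eval_part.comp
      ((Computable.ofNat Code).comp (hh.comp Computable.id (Computable.const e)))
      (Computable.const 0)).map (Computable.pred.comp Computable.snd).to₂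
  · refine le_iInf₂ fun p hp => KOf_le ?_
    have hp' : (U p).val = It n := hp
    have hval : (Denumerable.ofNat Code (h p e)).eval 0 = Part.some (n + 1) := by
      change (phi (h p e)).val 0 = _
      rw [← hphi, hp', It_succ_apply _ he, Nat.zero_add]
    simp [hval]

theorem KOf_ne_top {V : Word →. ℕ} (hV : OptimalPlain V) (n : ℕ) : KOf V n ≠ ⊤ := by
  obtain ⟨c, hc⟩ := hV.2 (fun p => Part.some p.length) Computable.list_length
  have hn : KOf (fun p => Part.some p.length) n ≤ n := by
    have := KOf_le (V := fun p => Part.some p.length) (n := n)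
      (p := List.replicate n true) (by simp)
    simpa using this
  have : KOf V n ≤ ((n + c : ℕ) : ℕ∞) :=
    (hc n).trans (by push_cast; gcongr)
  exact ne_top_of_le_ne_top (ENat.natCast_ne_top _) this

theorem EqCt.of_leCt {f g : ℕ → ℕ∞} (hfg : LeCt f g) (hgf : LeCt g f) (hg : ∀ n, g n ≠ ⊤) :
    EqCt f g := by
  obtain ⟨c, hc⟩ := hfg
  obtain ⟨d, hd⟩ := hgf
  refine ⟨max c d, fun n => ?_⟩
  obtain ⟨b, hb⟩ := ENat.ne_top_iff_exists.1 (hg n)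
  have hcn := hc n
  have hdn := hd n
  rw [← hb] at hcn hdn
  obtain ⟨a, ha⟩ := ENat.ne_top_iff_exists.1
    (ne_top_of_le_ne_top (ENat.natCast_ne_top (b + c)) (by exact_mod_cast hcn))
  rw [← ha] at hcn hdn
  refine ⟨a, b, ha.symm, hb.symm, ?_⟩
  norm_cast at hcn hdn
  rw [abs_le]
  constructor <;> omega

/-- `K^ℤ_Church↾ℕ =ct K`. -/
theorem stmt12 (U : Word → Eff) (hU : StronglyUniversalEff U)
    (U₀ : Word →. ℕ) (hU₀ : OptimalPlain U₀) :
    EqCt (fun n : ℕ => KChurchZ U (n : ℤ)) (KOf U₀) := by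
  obtain ⟨W, hW, hWU⟩ := exists_partrec_KOf_le_KChurchZ hU.1
  obtain ⟨c, hc⟩ := hU₀.2 W hW
  exact EqCt.of_leCt (KChurchZ_leCt_KOf hU hU₀.1)
    ⟨c, fun n => (hc n).trans (by gcongr; exact hWU n)⟩ (KOf_ne_top hU₀)
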